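/- The τ-function and w satisfy (ŵ − w̃)·τ̃·τ̂ = −χ_{−δ,ε}(ξ+δ)·τ·τ̂̃, where χ_{−δ,ε}(ξ+δ) = ζ(−δ) + ζ(ε) + ζ(ξ+δ) − ζ(ξ+ε), τ̃, τ̂ denote τ evaluated at (n+1,m,h), (n,m+1,h), τ̂̃ at (n+1,m+1,h), and similarly for w. -/

import Mathlib

open scoped BigOperators

noncomputable section

/-- A period lattice in `ℂ` spanned by two `ℝ`-independent periods. -/
structure EllLattice where
  ω₁ : ℂ
  ω₂ : ℂ
  indep : ∀ a b : ℝ, a • ω₁ + b • ω₂ = 0 → a = 0 ∧ b = 0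

namespace EllLattice

/-- Membership in the lattice `Λ = ℤω₁ + ℤω₂`. -/
def mem (L : EllLattice) (z : ℂ) : Prop := ∃ m n : ℤ, z = m • L.ω₁ + n • L.ω₂

/-- The lattice point with integer coordinates `p = (m, n)`. -/
def per (L : EllLattice) (p : ℤ × ℤ) : ℂ := p.1 • L.ω₁ + p.2 • L.ω₂

/-- The Weierstrass sigma function associated to the lattice, defined by its
Hadamard product over the nonzero lattice points. -/
def sigma (L : EllLattice) (z : ℂ) : ℂ :=
  z * ∏' p : {p : ℤ × ℤ // p ≠ 0},
      ((1 - z / L.per p.1) *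
        Complex.exp (z / L.per p.1 + z ^ 2 / (2 * (L.per p.1) ^ 2)))

/-- The Weierstrass zeta function `ζ = σ′/σ`. -/
def zeta (L : EllLattice) (z : ℂ) : ℂ := deriv L.sigma z / L.sigma z

/-- The Weierstrass `℘`-function `℘ = −ζ′`. -/
def wp (L : EllLattice) (z : ℂ) : ℂ := - deriv L.zeta z

/-- `Φ_ξ(κ) = σ(ξ+κ)/(σ(ξ)σ(κ))`. -/
def Phi (L : EllLattice) (ξ κ : ℂ) : ℂ := L.sigma (ξ + κ) / (L.sigma ξ * L.sigma κ)

/-- The Lamé function `Ψ_ξ(κ) = Φ_ξ(κ)·e^{−ζ(ξ)κ}`. -/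
def Psi (L : EllLattice) (ξ κ : ℂ) : ℂ := L.Phi ξ κ * Complex.exp (-(L.zeta ξ) * κ)

/-- `η_δ(ξ) = ζ(ξ+δ) − ζ(ξ) − ζ(δ)`. -/
def eta (L : EllLattice) (δ ξ : ℂ) : ℂ := L.zeta (ξ + δ) - L.zeta ξ - L.zeta δ

/-- `χ_{α,β}(ξ) = ζ(α) + ζ(β) + ζ(ξ) − ζ(ξ+α+β)`. -/
def chi (L : EllLattice) (α β ξ : ℂ) : ℂ :=
  L.zeta α + L.zeta β + L.zeta ξ - L.zeta (ξ + α + β)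

end EllLattice

open Matrix

/-- All the data entering the elliptic (N,N′)-soliton solutions of the lattice KP system:
a period lattice, lattice parameters `δ, ε, λ`, a base point `ξ₀`, rapidity parameters
`κ_i, κ′_j`, initial plane-wave constants `ρ⁰_i, ν⁰_j` and a constant `N′×N` matrix `C`. -/
structure KPData (N N' : ℕ) where
  L : EllLattice
  del : ℂ
  eps : ℂ
  lam : ℂ
  xi0 : ℂ
  κ : Fin N → ℂ
  κ' : Fin N' → ℂ
  ρ0 : Fin N → ℂ
  ν0 : Fin N' → ℂ
  C : Matrix (Fin N') (Fin N) ℂ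

namespace KPData

variable {N N' : ℕ}

/-- `ξ = ξ₀ + nδ + mε + hλ`. -/
def xi (D : KPData N N') (n m h : ℤ) : ℂ :=
  D.xi0 + n • D.del + m • D.eps + h • D.lam

/-- The plane-wave factor `ρ_i(n,m,h)`. -/
def ρ (D : KPData N N') (i : Fin N) (n m h : ℤ) : ℂ :=
  (Complex.exp (-(D.L.zeta D.del) * D.κ i) * D.L.Psi D.del (-(D.κ i))) ^ n *
  (Complex.exp (-(D.L.zeta D.eps) * D.κ i) * D.L.Psi D.eps (-(D.κ i))) ^ m *
  (Complex.exp (-(D.L.zeta D.lam) * D.κ i) * D.L.Psi D.lam (-(D.κ i))) ^ h *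
  Complex.exp (D.L.zeta (D.xi n m h) * D.κ i) * D.ρ0 i

/-- The plane-wave factor `ν_j(n,m,h)`. -/
def ν (D : KPData N N') (j : Fin N') (n m h : ℤ) : ℂ :=
  (Complex.exp (D.L.zeta D.del * D.κ' j) * D.L.Psi D.del (D.κ' j)) ^ (-n) *
  (Complex.exp (D.L.zeta D.eps * D.κ' j) * D.L.Psi D.eps (D.κ' j)) ^ (-m) *
  (Complex.exp (D.L.zeta D.lam * D.κ' j) * D.L.Psi D.lam (D.κ' j)) ^ (-h) *
  Complex.exp (D.L.zeta (D.xi n m h) * D.κ' j) * D.ν0 j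

/-- The dressed elliptic Cauchy matrix `M_{ij} = ρ_i Ψ_ξ(κ_i + κ′_j) ν_j`. -/
def M (D : KPData N N') (n m h : ℤ) : Matrix (Fin N) (Fin N') ℂ :=
  Matrix.of fun i j => D.ρ i n m h * D.L.Psi (D.xi n m h) (D.κ i + D.κ' j) * D.ν j n m h

/-- The column vector `r = (ρ_i Ψ_ξ(κ_i))_i`. -/
def r (D : KPData N N') (n m h : ℤ) : Fin N → ℂ :=
  fun i => D.ρ i n m h * D.L.Psi (D.xi n m h) (D.κ i)

/-- The column vector `s = (ν_j Ψ_ξ(κ′_j))_j`. -/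
def s (D : KPData N N') (n m h : ℤ) : Fin N' → ℂ :=
  fun j => D.ν j n m h * D.L.Psi (D.xi n m h) (D.κ' j)

/-- The τ-function `τ = det(1 + MC)`. -/
def τ (D : KPData N N') (n m h : ℤ) : ℂ := (1 + D.M n m h * D.C).det

/-- The diagonal matrix `χ_{α,K}(ξ) = diag(χ_{α,κ_i}(ξ))`. -/
def DK (D : KPData N N') (α : ℂ) (n m h : ℤ) : Matrix (Fin N) (Fin N) ℂ :=
  Matrix.diagonal fun i => D.L.chi α (D.κ i) (D.xi n m h)

/-- The diagonal matrix `χ_{β,K′}(ξ) = diag(χ_{β,κ′_j}(ξ))`. -/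
def DK' (D : KPData N N') (β : ℂ) (n m h : ℤ) : Matrix (Fin N') (Fin N') ℂ :=
  Matrix.diagonal fun j => D.L.chi β (D.κ' j) (D.xi n m h)

/-- `W_β = 1 − sᵀ (χ_{β,K′}(ξ))⁻¹ C (1+MC)⁻¹ r`. -/
def W (D : KPData N N') (β : ℂ) (n m h : ℤ) : ℂ :=
  1 - D.s n m h ⬝ᵥ ((D.DK' β n m h)⁻¹ *ᵥ (D.C *ᵥ ((1 + D.M n m h * D.C)⁻¹ *ᵥ D.r n m h)))

/-- `V_α = 1 − sᵀ (1+CM)⁻¹ C (χ_{α,K}(ξ))⁻¹ r`. -/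
def V (D : KPData N N') (α : ℂ) (n m h : ℤ) : ℂ :=
  1 - D.s n m h ⬝ᵥ ((1 + D.C * D.M n m h)⁻¹ *ᵥ (D.C *ᵥ ((D.DK α n m h)⁻¹ *ᵥ D.r n m h)))

/-- `w₀ = sᵀ C (1+MC)⁻¹ r`. -/
def w0 (D : KPData N N') (n m h : ℤ) : ℂ :=
  D.s n m h ⬝ᵥ (D.C *ᵥ ((1 + D.M n m h * D.C)⁻¹ *ᵥ D.r n m h))

/-- `w = ζ(ξ) − w₀ − nζ(δ) − mζ(ε) − hζ(λ)`. -/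
def w (D : KPData N N') (n m h : ℤ) : ℂ :=
  D.L.zeta (D.xi n m h) - D.w0 n m h - n • D.L.zeta D.del - m • D.L.zeta D.eps -
    h • D.L.zeta D.lam

/-- `S_{β,α} = sᵀ (χ_{β,K′}(ξ))⁻¹ C (1+MC)⁻¹ (χ_{α,K}(ξ))⁻¹ r`. -/
def S (D : KPData N N') (β α : ℂ) (n m h : ℤ) : ℂ :=
  D.s n m h ⬝ᵥ ((D.DK' β n m h)⁻¹ *ᵥ
    (D.C *ᵥ ((1 + D.M n m h * D.C)⁻¹ *ᵥ ((D.DK α n m h)⁻¹ *ᵥ D.r n m h))))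

/-- `u_α = (1+MC)⁻¹ (χ_{α,K}(ξ))⁻¹ r`. -/
def u (D : KPData N N') (α : ℂ) (n m h : ℤ) : Fin N → ℂ :=
  (1 + D.M n m h * D.C)⁻¹ *ᵥ ((D.DK α n m h)⁻¹ *ᵥ D.r n m h)

/-- `u₀ = (1+MC)⁻¹ r`. -/
def u0 (D : KPData N N') (n m h : ℤ) : Fin N → ℂ :=
  (1 + D.M n m h * D.C)⁻¹ *ᵥ D.r n m h

/-- the adjoint (row) vector `ᵗu_β = sᵀ (χ_{β,K′}(ξ))⁻¹ (1+CM)⁻¹`. -/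
def tu (D : KPData N N') (β : ℂ) (n m h : ℤ) : Fin N' → ℂ :=
  (D.s n m h ᵥ* (D.DK' β n m h)⁻¹) ᵥ* (1 + D.C * D.M n m h)⁻¹

/-- the adjoint (row) vector `ᵗu₀ = sᵀ (1+CM)⁻¹`. -/
def tu0 (D : KPData N N') (n m h : ℤ) : Fin N' → ℂ :=
  D.s n m h ᵥ* (1 + D.C * D.M n m h)⁻¹

/-- The gauge variable `𝒱_α = Φ_ξ(α)·V_α`. -/
def calV (D : KPData N N') (α : ℂ) (n m h : ℤ) : ℂ :=
  D.L.Phi (D.xi n m h) α * D.V α n m h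

/-- The gauge variable `𝒲_β = Φ_ξ(β)·W_β`. -/
def calW (D : KPData N N') (β : ℂ) (n m h : ℤ) : ℂ :=
  D.L.Phi (D.xi n m h) β * D.W β n m h

/-- The Schwarzian variable `Z_{β,α} = Φ_ξ(α+β)·(1 − χ_{α,β}(ξ)·S_{β,α})`. -/
def Z (D : KPData N N') (β α : ℂ) (n m h : ℤ) : ℂ :=
  D.L.Phi (D.xi n m h) (α + β) * (1 - D.L.chi α β (D.xi n m h) * D.S β α n m h)

/-- Genericity of the parameters (together with finitely many auxiliary points `extra`):
no nontrivial integer combination of `ξ₀, δ, ε, λ`, the rapidity parameters and the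
auxiliary points lies on the lattice.  In particular all arguments of `σ` occurring in
the soliton solutions and their shifts lie outside `Λ`. -/
def Generic {P : ℕ} (D : KPData N N') (extra : Fin P → ℂ) : Prop :=
  ∀ (c0 cn cm ch : ℤ) (a : Fin N → ℤ) (b : Fin N' → ℤ) (e : Fin P → ℤ),
    ¬ (c0 = 0 ∧ cn = 0 ∧ cm = 0 ∧ ch = 0 ∧ a = 0 ∧ b = 0 ∧ e = 0) →
    ¬ D.L.mem (c0 • D.xi0 + cn • D.del + cm • D.eps + ch • D.lam +
      (∑ i, a i • D.κ i) + (∑ j, b j • D.κ' j) + ∑ t, e t • extra t)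

end KPData

/-!
The function `σ` is entire, odd, and quasi-periodic with simple zeros exactly at the lattice points.
As functions of `z`, the three-term expression in the products `σ(z + a) σ(z - a)` and a single such
product have the same quasi-periodicity factors, so their quotient is an entire elliptic function,
hence constant; one more zero shows that the three-term expression vanishes. This gives an addition
formula for `Φ`, whose confluent case expresses `Φ_x(z) Φ_y(z)` through `χ_{x,y}(z)`.

After `e^{ζ(ξ)κ}` is absorbed into the plane waves, a unit shift in `n` or `m` changes `M` by the
rank-one matrix `r s̃ᵀ` (or `r ŝᵀ`), while the vectors at the two neighbouring sites differ by a
multiple `χ` of `r` (or of `s` at the opposite corner). The matrix determinant lemma turns the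
quotients of τ-functions into values of the form `sᵀ C (1 + M C)⁻¹ r`, and the resolvent identity
relates these to `ŵ - w̃`.
-/

open Filter Topology

section EntireQuotients

variable {f g : ℂ → ℂ}

lemma exists_differentiable_eq_mul_of_simple_zeros (hf : Differentiable ℂ f)
    (hg : Differentiable ℂ g) (hzero : ∀ z, g z = 0 → f z = 0 ∧ deriv g z ≠ 0) :
    ∃ q : ℂ → ℂ, Differentiable ℂ q ∧ ∀ z, f z = q z * g z := by
  have differentiable_dslope {u : ℂ → ℂ} (hu : Differentiable ℂ u) (a : ℂ) :
      Differentiable ℂ (dslope u a) :=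
    differentiableOn_univ.mp ((Complex.differentiableOn_dslope univ_mem).mpr hu.differentiableOn)
  refine ⟨fun z ↦ if g z = 0 then deriv f z / deriv g z else f z / g z, fun a ↦ ?_, fun z ↦ ?_⟩
  · by_cases hga : g a = 0
    · obtain ⟨hfa, hga'⟩ := hzero a hga
      have hslope : dslope g a a ≠ 0 := by rwa [dslope_same]
      refine (((differentiable_dslope hf a) a).div ((differentiable_dslope hg a) a)
        hslope).congr_of_eventuallyEq ?_
      filter_upwards [(differentiable_dslope hg a).continuous.continuousAt.eventually_ne hslope]
        with z hz
      rcases eq_or_ne z a with rfl | hza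
      · simp [hga]
      · have hgz : g z ≠ 0 := fun h ↦ hz (by simp [dslope_of_ne _ hza, slope_def_field, hga, h])
        have : z - a ≠ 0 := sub_ne_zero.mpr hza
        simp only [hgz, if_false, Pi.div_apply, dslope_of_ne _ hza, slope_def_field, hga, hfa,
          sub_zero]
        field_simp
    · refine ((hf a).div (hg a) hga).congr_of_eventuallyEq ?_
      filter_upwards [hg.continuous.continuousAt.eventually_ne hga] with z hz
      simp [hz]
  · by_cases hgz : g z = 0
    · simp [hgz, (hzero z hgz).1]
    · simp [hgz]

lemma exists_eq_const_mul_of_quasiperiodic (Λ : Submodule ℤ ℂ) [DiscreteTopology Λ] [IsZLattice ℝ Λ]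
    (hf : Differentiable ℂ f) (hg : Differentiable ℂ g)
    (hzero : ∀ z, g z = 0 → f z = 0 ∧ deriv g z ≠ 0)
    (hquasi : ∀ w ∈ Λ, ∃ e : ℂ → ℂ, ∀ z, e z ≠ 0 ∧ f (z + w) = e z * f z ∧ g (z + w) = e z * g z) :
    ∃ c : ℂ, ∀ z, f z = c * g z := by
  obtain ⟨q, hq, hfq⟩ := exists_differentiable_eq_mul_of_simple_zeros hf hg hzero
  have dense_ne_zero : Dense {z | g z ≠ 0} := fun a ↦ by
    by_cases hga : g a = 0
    · exact mem_closure_of_frequently_of_tendsto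
        ((hg a).hasDerivAt.eventually_ne (hzero a hga).2).frequently
        (tendsto_id.mono_left nhdsWithin_le_nhds)
    · exact subset_closure hga
  have periodic_q (z w : ℂ) (hw : w ∈ Λ) : q (z + w) = q z := by
    obtain ⟨e, he⟩ := hquasi w hw
    refine congrFun (Continuous.ext_on (f := fun z ↦ q (z + w)) dense_ne_zero
      (hq.continuous.comp (continuous_add_const w)) hq.continuous fun x hx ↦ ?_) z
    obtain ⟨hex, hfx, hgx⟩ := he x
    rw [hfq, hfq x, hgx] at hfx
    exact mul_right_cancel₀ (mul_ne_zero hex hx) (hfx.trans (by ring))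
  obtain ⟨c, hc⟩ := hq.exists_const_forall_eq_of_bounded
    (IsZLattice.isCompact_range_of_periodic Λ q hq.continuous periodic_q).isBounded
  exact ⟨c, fun z ↦ by rw [hfq, hc]⟩

end EntireQuotients

namespace EllLattice

section PrimaryFactor

/-- The Weierstrass primary factor `E₂(u) = (1 - u) exp(u + u² / 2)` of genus two. -/
def primaryFactor (u : ℂ) : ℂ := (1 - u) * Complex.exp (u + u ^ 2 / 2)

@[fun_prop]
lemma differentiable_primaryFactor : Differentiable ℂ primaryFactor := by
  unfold primaryFactor
  fun_prop

@[simp]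
lemma primaryFactor_zero : primaryFactor 0 = 1 := by simp [primaryFactor]

lemma primaryFactor_eq_zero_iff {u : ℂ} : primaryFactor u = 0 ↔ u = 1 := by
  rw [primaryFactor, mul_eq_zero, or_iff_left (Complex.exp_ne_zero _), sub_eq_zero, eq_comm]

lemma norm_primaryFactor_sub_one_le {u : ℂ} (hu : ‖u‖ ≤ 1 / 2) :
    ‖primaryFactor u - 1‖ ≤ 2 * ‖u‖ ^ 3 := by
  have hu1 : ‖-u‖ < 1 := by rw [norm_neg]; linarith
  have hne : 1 + -u ≠ 0 := fun h ↦ by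
    rw [eq_neg_of_add_eq_zero_right h] at hu1
    norm_num at hu1
  have exp_log_add : primaryFactor u = Complex.exp (Complex.log (1 + -u) + (u + u ^ 2 / 2)) := by
    rw [Complex.exp_add, Complex.exp_log hne, primaryFactor, sub_eq_add_neg]
  have log_add_le : ‖Complex.log (1 + -u) + (u + u ^ 2 / 2)‖ ≤ ‖u‖ ^ 3 := by
    have taylor : Complex.log (1 + -u) - Complex.logTaylor (2 + 1) (-u) =
        Complex.log (1 + -u) + (u + u ^ 2 / 2) := by
      simp [Complex.logTaylor_succ, Complex.logTaylor_zero]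
      ring
    have inv_le : (1 - ‖u‖)⁻¹ ≤ 2 := inv_le_of_inv_le₀ (by norm_num) (by linarith)
    calc ‖Complex.log (1 + -u) + (u + u ^ 2 / 2)‖
      _ ≤ ‖u‖ ^ 3 * (1 - ‖u‖)⁻¹ / 3 := by
          have := Complex.norm_log_sub_logTaylor_le 2 hu1
          rw [taylor, norm_neg] at this
          exact this.trans_eq (by norm_num)
      _ ≤ ‖u‖ ^ 3 * 2 / 3 := by gcongr
      _ ≤ ‖u‖ ^ 3 := by linarith [pow_nonneg (norm_nonneg u) 3]
  have pow_le_one : ‖u‖ ^ 3 ≤ 1 := pow_le_one₀ (norm_nonneg u) (by linarith)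
  rw [exp_log_add]
  linarith [Complex.norm_exp_sub_one_le (log_add_le.trans pow_le_one)]

lemma norm_primaryFactor_div_sub_one_le {r : ℝ} {z l : ℂ} (hz : ‖z‖ < r) (hl : 2 * r < ‖l‖) :
    ‖primaryFactor (z / l) - 1‖ ≤ 2 * r ^ 3 * ‖l‖ ^ (-3 : ℝ) := by
  have hl0 : 0 < ‖l‖ := by linarith [norm_nonneg z]
  have hzl : ‖z / l‖ ≤ 1 / 2 := by rw [norm_div, div_le_iff₀ hl0]; linarith
  calc ‖primaryFactor (z / l) - 1‖
    _ ≤ 2 * (‖z‖ / ‖l‖) ^ 3 := by simpa using norm_primaryFactor_sub_one_le hzl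
    _ ≤ 2 * (r / ‖l‖) ^ 3 := by gcongr
    _ = 2 * r ^ 3 * ‖l‖ ^ (-3 : ℝ) := by
        rw [show ‖l‖ ^ (-3 : ℝ) = (‖l‖ ^ 3)⁻¹ by norm_cast]
        ring

end PrimaryFactor

section Lattice

/-- The period pair of `L`, giving access to Mathlib's period lattices. -/
def periodPair (L : EllLattice) : PeriodPair where
  ω₁ := L.ω₁
  ω₂ := L.ω₂
  indep := LinearIndependent.pair_iff.mpr L.indep

/-- The period lattice `Λ` as a `ℤ`-submodule of `ℂ`. -/
abbrev lattice (L : EllLattice) : Submodule ℤ ℂ := L.periodPair.lattice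

variable (L : EllLattice)

lemma mem_iff_mem_lattice (z : ℂ) : L.mem z ↔ z ∈ L.lattice := by
  simp only [mem, lattice, PeriodPair.mem_lattice, periodPair, zsmul_eq_mul, eq_comm]

lemma coe_latticeEquivProd_symm (p : ℤ × ℤ) :
    (L.periodPair.latticeEquivProd.symm p : ℂ) = L.per p := by
  rw [PeriodPair.latticeEquiv_symm_apply]
  simp [per, periodPair]

lemma countable_lattice : (L.lattice : Set ℂ).Countable :=
  Set.countable_coe_iff.mp (L.periodPair.latticeEquivProd.toEquiv.countable_iff.mpr inferInstance)

lemma eventually_lt_norm_coe_lattice (r : ℝ) : ∀ᶠ l : L.lattice in cofinite, r < ‖(l : ℂ)‖ :=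
  have discrete : IsDiscrete (L.lattice.toAddSubgroup : Set ℂ) :=
    isDiscrete_iff_discreteTopology.mpr (inferInstanceAs (DiscreteTopology L.lattice))
  (tendsto_norm_cocompact_atTop.comp
    (AddSubgroup.tendsto_coe_cofinite_of_discrete _ discrete)).eventually_gt_atTop r

lemma summable_norm_rpow_neg_three : Summable fun l : L.lattice ↦ ‖(l : ℂ)‖ ^ (-3 : ℝ) :=
  ZLattice.summable_norm_rpow L.lattice _ (by simp; norm_num)

end Lattice

section SigmaProduct

variable (L : EllLattice)

lemma sigma_eq_mul_tprod (z : ℂ) :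
    L.sigma z = z * ∏' l : L.lattice, primaryFactor (z / l) := by
  have tprod_ne_zero_eq : ∏' p : {p : ℤ × ℤ | p ≠ 0}, primaryFactor (z / L.per p) =
      ∏' p : ℤ × ℤ, primaryFactor (z / L.per p) :=
    tprod_subtype_eq_of_mulSupport_subset (f := fun p ↦ primaryFactor (z / L.per p))
      fun p hp h0 ↦ hp (by simp [h0, per])
  rw [← L.periodPair.latticeEquivProd.symm.toEquiv.tprod_eq]
  simp only [LinearEquiv.coe_toEquiv, coe_latticeEquivProd_symm]
  rw [← tprod_ne_zero_eq, sigma]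
  congr 1
  refine tprod_congr fun p ↦ ?_
  rw [primaryFactor, div_pow, div_div, mul_comm (2 : ℂ)]

lemma hasProdLocallyUniformlyOn_primaryFactor (r : ℝ) :
    HasProdLocallyUniformlyOn (fun (l : L.lattice) z ↦ primaryFactor (z / l))
      (fun z ↦ ∏' l : L.lattice, primaryFactor (z / l)) (Metric.ball 0 r) := by
  have bound : ∀ᶠ l : L.lattice in cofinite, ∀ z ∈ Metric.ball (0 : ℂ) r,
      ‖primaryFactor (z / l) - 1‖ ≤ 2 * r ^ 3 * ‖(l : ℂ)‖ ^ (-3 : ℝ) := by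
    filter_upwards [L.eventually_lt_norm_coe_lattice (2 * r)] with l hl z hz
    exact norm_primaryFactor_div_sub_one_le (mem_ball_zero_iff.mp hz) hl
  simpa using (L.summable_norm_rpow_neg_three.mul_left _).hasProdLocallyUniformlyOn_one_add
    Metric.isOpen_ball bound fun l ↦ (by fun_prop : Differentiable ℂ _).continuous.continuousOn

lemma differentiable_tprod_primaryFactor :
    Differentiable ℂ fun z ↦ ∏' l : L.lattice, primaryFactor (z / l) := fun z ↦ by
  have hball : Metric.ball (0 : ℂ) (‖z‖ + 1) ∈ 𝓝 z := Metric.isOpen_ball.mem_nhds (by simp)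
  refine (TendstoLocallyUniformlyOn.differentiableOn
    (hasProdLocallyUniformlyOn_iff_tendstoLocallyUniformlyOn.mp
      (L.hasProdLocallyUniformlyOn_primaryFactor _))
    (.of_forall fun s ↦ ?_) Metric.isOpen_ball).differentiableAt hball
  fun_prop

lemma hasProd_primaryFactor (z : ℂ) :
    HasProd (fun l : L.lattice ↦ primaryFactor (z / l))
      (∏' l : L.lattice, primaryFactor (z / l)) :=
  (L.hasProdLocallyUniformlyOn_primaryFactor (‖z‖ + 1)).hasProd (by simp)

lemma tprod_primaryFactor_ne_zero {z : ℂ} (hz : z ∉ L.lattice) :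
    ∏' l : L.lattice, primaryFactor (z / l) ≠ 0 := by
  have summable_sub_one : Summable fun l : L.lattice ↦ ‖primaryFactor (z / l) - 1‖ := by
    refine .of_norm_bounded_eventually
      (L.summable_norm_rpow_neg_three.mul_left (2 * (‖z‖ + 1) ^ 3)) ?_
    filter_upwards [L.eventually_lt_norm_coe_lattice (2 * (‖z‖ + 1))] with l hl
    rw [norm_norm]
    exact norm_primaryFactor_div_sub_one_le (lt_add_one _) hl
  have factor_ne_zero (l : L.lattice) : 1 + (primaryFactor (z / l) - 1) ≠ 0 := by
    rw [add_sub_cancel, Ne, primaryFactor_eq_zero_iff]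
    intro hzl
    exact hz (eq_of_div_eq_one hzl ▸ l.2)
  simpa using tprod_one_add_ne_zero_of_summable factor_ne_zero summable_sub_one

@[fun_prop]
lemma differentiable_sigma : Differentiable ℂ L.sigma := by
  rw [funext L.sigma_eq_mul_tprod]
  exact differentiable_id.mul L.differentiable_tprod_primaryFactor

lemma sigma_ne_zero {z : ℂ} (hz : z ∉ L.lattice) : L.sigma z ≠ 0 := by
  rw [sigma_eq_mul_tprod]
  exact mul_ne_zero (fun h ↦ hz (h ▸ zero_mem _)) (L.tprod_primaryFactor_ne_zero hz)

@[simp]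
lemma sigma_zero : L.sigma 0 = 0 := by simp [sigma]

@[simp]
lemma sigma_neg (z : ℂ) : L.sigma (-z) = -L.sigma z := by
  rw [sigma_eq_mul_tprod, sigma_eq_mul_tprod, ← (Equiv.neg L.lattice).tprod_eq]
  simp

lemma hasDerivAt_sigma_zero : HasDerivAt L.sigma 1 0 := by
  rw [funext L.sigma_eq_mul_tprod]
  simpa using (hasDerivAt_id (0 : ℂ)).fun_mul (L.differentiable_tprod_primaryFactor 0).hasDerivAt

end SigmaProduct

section Quasiperiodicity

variable (L : EllLattice)

/-- The factor of `σ(z)` attached to the lattice point `l`, the factor `z` being attached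
to `l = 0`. -/
def sigmaFactor (l z : ℂ) : ℂ :=
  (if l = 0 then z else 1 - z / l) * Complex.exp (z / l + (z / l) ^ 2 / 2)

lemma hasProd_sigmaFactor (z : ℂ) :
    HasProd (fun l : L.lattice ↦ sigmaFactor l z) (L.sigma z) := by
  classical
  rw [sigma_eq_mul_tprod]
  convert (hasProd_ite_eq (0 : L.lattice) z).mul (L.hasProd_primaryFactor z) using 2 with l
  rcases eq_or_ne l 0 with rfl | hl
  · simp [sigmaFactor]
  · simp [sigmaFactor, primaryFactor, hl]

/-- The exponent by which the factor at `l` of `σ(z + w)` and the factor at `l - w` of `σ(z)`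
differ, up to a multiple of `z ^ 2`. -/
def quasiperiodTerm (w l : ℂ) : ℂ := l⁻¹ - (l - w)⁻¹ + w * (l⁻¹) ^ 2

lemma sigmaFactor_add_mul_sigmaFactor_sub (l w z u : ℂ) :
    sigmaFactor l (z + w) * sigmaFactor (l - w) u =
      sigmaFactor l (u + w) * sigmaFactor (l - w) z *
        Complex.exp (quasiperiodTerm w l * (z - u) +
          (1 / (w - l) ^ 2 - 1 / l ^ 2) * ((u ^ 2 - z ^ 2) / 2)) := by
  have linear_part : (if l = 0 then z + w else 1 - (z + w) / l) *
      (if l - w = 0 then u else 1 - u / (l - w)) =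
      (if l = 0 then u + w else 1 - (u + w) / l) *
      (if l - w = 0 then z else 1 - z / (l - w)) := by
    by_cases hl : l = 0 <;> by_cases hlw : l - w = 0
    · rw [hl, zero_sub, neg_eq_zero] at hlw
      simp only [hl, hlw, sub_zero, if_true, add_zero, mul_comm]
    · have hw : w ≠ 0 := fun hw ↦ hlw (by rw [hl, hw, sub_zero])
      simp only [hl, zero_sub, neg_eq_zero, hw, if_true, if_false]
      field_simp
      ring
    · rw [sub_eq_zero] at hlw
      simp only [← hlw, hl, sub_self, if_true, if_false]
      field_simp
      ring
    · simp only [hl, hlw, if_false]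
      field_simp
      ring
  have exponent : (z + w) / l + ((z + w) / l) ^ 2 / 2 + (u / (l - w) + (u / (l - w)) ^ 2 / 2) =
      (u + w) / l + ((u + w) / l) ^ 2 / 2 + (z / (l - w) + (z / (l - w)) ^ 2 / 2) +
        (quasiperiodTerm w l * (z - u) +
          (1 / (w - l) ^ 2 - 1 / l ^ 2) * ((u ^ 2 - z ^ 2) / 2)) := by
    rw [quasiperiodTerm, ← neg_sub l w, neg_sq, one_div, one_div, ← inv_pow, ← inv_pow]
    ring
  simp only [sigmaFactor]
  rw [mul_mul_mul_comm, linear_part, ← Complex.exp_add, exponent, Complex.exp_add,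
    Complex.exp_add ((u + w) / l + _)]
  ring

lemma summable_quasiperiodTerm (w : ℂ) :
    Summable fun l : L.lattice ↦ quasiperiodTerm w l := by
  refine .of_norm_bounded_eventually (L.summable_norm_rpow_neg_three.mul_left (2 * ‖w‖ ^ 2)) ?_
  filter_upwards [L.eventually_lt_norm_coe_lattice (2 * ‖w‖)] with l hl
  have hl0 : 0 < ‖(l : ℂ)‖ := by linarith [norm_nonneg w]
  have hlw : ‖(l : ℂ)‖ / 2 ≤ ‖(l : ℂ) - w‖ := by linarith [norm_sub_norm_le (l : ℂ) w]
  have hne : (l : ℂ) ≠ 0 := norm_pos_iff.mp hl0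
  have hne' : (l : ℂ) - w ≠ 0 := norm_pos_iff.mp (by linarith)
  calc ‖quasiperiodTerm w l‖
    _ = ‖w‖ ^ 2 / (‖(l : ℂ)‖ ^ 2 * ‖(l : ℂ) - w‖) := by
        rw [quasiperiodTerm, ← norm_pow, ← norm_pow, ← norm_mul, ← norm_div, ← norm_neg]
        congr 1
        field_simp
        ring
    _ ≤ ‖w‖ ^ 2 / (‖(l : ℂ)‖ ^ 2 * (‖(l : ℂ)‖ / 2)) := by gcongr
    _ = 2 * ‖w‖ ^ 2 * ‖(l : ℂ)‖ ^ (-3 : ℝ) := by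
        rw [show ‖(l : ℂ)‖ ^ (-3 : ℝ) = (‖(l : ℂ)‖ ^ 3)⁻¹ by norm_cast]
        field_simp

variable {L} {w : ℂ}

lemma sigma_add_mul_sigma (hw : w ∈ L.lattice) (z u : ℂ) :
    L.sigma (z + w) * L.sigma u = L.sigma (u + w) * L.sigma z *
      Complex.exp ((∑' l : L.lattice, quasiperiodTerm w l) * (z - u)) := by
  have hasProd_sub (x : ℂ) :
      HasProd (fun l : L.lattice ↦ sigmaFactor (l - w) x) (L.sigma x) :=
    (Equiv.subRight (⟨w, hw⟩ : L.lattice)).hasProd_iff.mpr (L.hasProd_sigmaFactor x)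
  -- The coefficients of `z ^ 2` sum to `℘(w)`, for which Mathlib has the junk value `0`.
  have hasSum_exponent : HasSum (fun l : L.lattice ↦ quasiperiodTerm w l * (z - u) +
      (1 / (w - l) ^ 2 - 1 / (l : ℂ) ^ 2) * ((u ^ 2 - z ^ 2) / 2))
      ((∑' l : L.lattice, quasiperiodTerm w l) * (z - u)) := by
    have hP := L.periodPair.hasSum_weierstrassP w
    rw [L.periodPair.weierstrassP_coe ⟨w, hw⟩] at hP
    simpa using ((L.summable_quasiperiodTerm w).hasSum.mul_right _).add (hP.mul_right _)
  refine ((L.hasProd_sigmaFactor (z + w)).mul (hasProd_sub u)).unique ?_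
  convert ((L.hasProd_sigmaFactor (u + w)).mul (hasProd_sub z)).mul hasSum_exponent.cexp using 2
  exact sigmaFactor_add_mul_sigmaFactor_sub _ _ _ _

lemma dense_compl_lattice : Dense (L.lattice : Set ℂ)ᶜ := L.countable_lattice.dense_compl ℝ

lemma exists_sigma_add_eq (hw : w ∈ L.lattice) :
    ∃ c η : ℂ, c ≠ 0 ∧ ∀ z, L.sigma (z + w) = c * Complex.exp (η * z) * L.sigma z := by
  obtain ⟨u, hu⟩ := (dense_compl_lattice (L := L)).nonempty
  have hu0 : L.sigma u ≠ 0 := L.sigma_ne_zero hu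
  have huw : L.sigma (u + w) ≠ 0 := L.sigma_ne_zero ((add_mem_cancel_right hw).not.mpr hu)
  set η := ∑' l : L.lattice, quasiperiodTerm w l
  refine ⟨L.sigma (u + w) / (L.sigma u * Complex.exp (η * u)), η, by simp [hu0, huw], fun z ↦ ?_⟩
  have h := sigma_add_mul_sigma hw z u
  rw [mul_sub, Complex.exp_sub] at h
  field_simp at h ⊢
  linear_combination h

lemma sigma_eq_zero_iff {z : ℂ} : L.sigma z = 0 ↔ z ∈ L.lattice := by
  refine ⟨not_imp_not.mp L.sigma_ne_zero, fun hz ↦ ?_⟩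
  obtain ⟨c, η, -, h⟩ := exists_sigma_add_eq hz
  simpa using h 0

lemma deriv_sigma_ne_zero (hw : w ∈ L.lattice) : deriv L.sigma w ≠ 0 := by
  obtain ⟨c, η, hc, h⟩ := exists_sigma_add_eq hw
  have hexp : DifferentiableAt ℂ (fun z ↦ c * Complex.exp (η * z)) 0 := by fun_prop
  have deriv_at_zero : HasDerivAt (fun z ↦ L.sigma (z + w)) c 0 := by
    simpa [funext h] using hexp.hasDerivAt.fun_mul L.hasDerivAt_sigma_zero
  rwa [← zero_add w, ← deriv_comp_add_const, deriv_at_zero.deriv]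

end Quasiperiodicity

section ThreeTerm

variable (L : EllLattice)

/-- The antisymmetric product `σ(x + y) σ(x - y)` out of which the three-term identity of the
`σ`-function is built. -/
def sigmaPair (x y : ℂ) : ℂ := L.sigma (x + y) * L.sigma (x - y)

@[fun_prop]
lemma differentiable_sigmaPair_left (y : ℂ) : Differentiable ℂ fun x ↦ L.sigmaPair x y := by
  unfold sigmaPair
  fun_prop

@[fun_prop]
lemma differentiable_sigmaPair_right (x : ℂ) : Differentiable ℂ (L.sigmaPair x) := by
  unfold sigmaPair
  fun_prop

lemma sigmaPair_swap (x y : ℂ) : L.sigmaPair y x = -L.sigmaPair x y := by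
  rw [sigmaPair, sigmaPair, ← neg_sub x y, sigma_neg, add_comm y x, mul_neg]

@[simp]
lemma sigmaPair_self (x : ℂ) : L.sigmaPair x x = 0 := by simp [sigmaPair]

@[simp]
lemma sigmaPair_neg_left (x y : ℂ) : L.sigmaPair (-x) y = L.sigmaPair x y := by
  rw [sigmaPair, sigmaPair, neg_add_eq_sub, ← neg_sub x y, ← neg_add', sigma_neg, sigma_neg]
  ring

variable {L}

lemma exists_sigmaPair_add_eq {w : ℂ} (hw : w ∈ L.lattice) :
    ∃ e : ℂ → ℂ, (∀ x, e x ≠ 0) ∧ ∀ x y, L.sigmaPair (x + w) y = e x * L.sigmaPair x y := by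
  obtain ⟨c, η, hc, h⟩ := exists_sigma_add_eq hw
  refine ⟨fun x ↦ c ^ 2 * Complex.exp (2 * η * x), fun x ↦ by simp [hc], fun x y ↦ ?_⟩
  rw [sigmaPair, add_right_comm, add_sub_right_comm, h, h, sigmaPair]
  beta_reduce
  rw [show 2 * η * x = η * (x + y) + η * (x - y) by ring, Complex.exp_add]
  ring

lemma sigmaPair_eq_zero_iff {x y : ℂ} :
    L.sigmaPair x y = 0 ↔ x + y ∈ L.lattice ∨ x - y ∈ L.lattice := by
  rw [sigmaPair, mul_eq_zero, sigma_eq_zero_iff, sigma_eq_zero_iff]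

lemma deriv_sigmaPair_left_ne_zero {x y : ℂ} (hy : y + y ∉ L.lattice)
    (hxy : L.sigmaPair x y = 0) : deriv (fun z ↦ L.sigmaPair z y) x ≠ 0 := by
  have hderiv : deriv (fun z ↦ L.sigmaPair z y) x =
      deriv L.sigma (x + y) * L.sigma (x - y) + L.sigma (x + y) * deriv L.sigma (x - y) :=
    ((L.differentiable_sigma _).hasDerivAt.comp_add_const x y |>.mul
      ((L.differentiable_sigma _).hasDerivAt.comp_sub_const x y)).deriv
  have not_both : ¬(x + y ∈ L.lattice ∧ x - y ∈ L.lattice) := fun ⟨hadd, hsub⟩ ↦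
    hy (by simpa using sub_mem hadd hsub)
  rw [hderiv]
  rcases sigmaPair_eq_zero_iff.mp hxy with hadd | hsub
  · rw [sigma_eq_zero_iff.mpr hadd, zero_mul, add_zero]
    exact mul_ne_zero (deriv_sigma_ne_zero hadd) (L.sigma_ne_zero fun h ↦ not_both ⟨hadd, h⟩)
  · rw [sigma_eq_zero_iff.mpr hsub, mul_zero, zero_add]
    exact mul_ne_zero (L.sigma_ne_zero fun h ↦ not_both ⟨h, hsub⟩) (deriv_sigma_ne_zero hsub)

variable (L)

/-- The three-term expression in products of `σ`-functions, as a function of `z`. -/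
def threeTerm (a b c z : ℂ) : ℂ :=
  L.sigmaPair z a * L.sigmaPair b c + L.sigmaPair z b * L.sigmaPair c a +
    L.sigmaPair z c * L.sigmaPair a b

lemma threeTerm_eq_zero_of_sigmaPair_eq_zero (a c : ℂ) {b z : ℂ} (hz : L.sigmaPair z b = 0) :
    L.threeTerm a b c z = 0 := by
  have threeTerm_self : L.threeTerm a b c b = 0 := by
    rw [threeTerm, sigmaPair_self, L.sigmaPair_swap a b]
    ring
  have of_sub_mem {x : ℂ} (hx : L.threeTerm a b c x = 0) (hzx : z - x ∈ L.lattice) :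
      L.threeTerm a b c z = 0 := by
    obtain ⟨e, -, he⟩ := exists_sigmaPair_add_eq hzx
    have : L.threeTerm a b c (x + (z - x)) = e x * L.threeTerm a b c x := by
      simp only [threeTerm, he]
      ring
    rw [← add_sub_cancel x z, this, hx, mul_zero]
  rcases sigmaPair_eq_zero_iff.mp hz with hadd | hsub
  · exact of_sub_mem (x := -b) (by simpa [threeTerm] using threeTerm_self) (by simpa using hadd)
  · exact of_sub_mem threeTerm_self hsub

lemma threeTerm_eq_zero_of_notMem {b c : ℂ} (hb : b + b ∉ L.lattice) (hbc : b + c ∉ L.lattice)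
    (hbc' : b - c ∉ L.lattice) (a z : ℂ) : L.threeTerm a b c z = 0 := by
  obtain ⟨k, hk⟩ := exists_eq_const_mul_of_quasiperiodic (f := L.threeTerm a b c)
    (g := fun z ↦ L.sigmaPair z b) L.lattice (by unfold threeTerm; fun_prop) (by fun_prop)
    (fun z hz ↦ ⟨L.threeTerm_eq_zero_of_sigmaPair_eq_zero a c hz,
      deriv_sigmaPair_left_ne_zero hb hz⟩)
    (fun w hw ↦ by
      obtain ⟨e, he0, he⟩ := exists_sigmaPair_add_eq hw
      refine ⟨e, fun z ↦ ⟨he0 z, ?_, he z b⟩⟩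
      simp only [threeTerm, he]
      ring)
  have threeTerm_at_c : L.threeTerm a b c c = 0 := by
    rw [threeTerm, sigmaPair_self, L.sigmaPair_swap b c]
    ring
  have pair_ne_zero : L.sigmaPair c b ≠ 0 := by
    rw [sigmaPair_swap, neg_ne_zero, Ne, sigmaPair_eq_zero_iff]
    exact not_or.mpr ⟨hbc, hbc'⟩
  have hk0 : k = 0 := (mul_eq_zero.mp ((hk c).symm.trans threeTerm_at_c)).resolve_right pair_ne_zero
  rw [hk, hk0, zero_mul]

lemma threeTerm_eq_zero (a b c z : ℂ) : L.threeTerm a b c z = 0 := by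
  have hdense : Dense {b : ℂ | b + b ∉ L.lattice ∧ b + c ∉ L.lattice ∧ b - c ∉ L.lattice} := by
    have hcountable := ((L.countable_lattice.image (· / 2)).union
      (L.countable_lattice.image (· - c))).union (L.countable_lattice.image (· + c))
    refine (hcountable.dense_compl ℝ).mono fun b hb ↦ ?_
    simp only [Set.mem_compl_iff, Set.mem_union, not_or] at hb
    exact ⟨fun h ↦ hb.1.1 ⟨_, h, by simp⟩, fun h ↦ hb.1.2 ⟨_, h, by simp⟩,
      fun h ↦ hb.2 ⟨_, h, by simp⟩⟩
  have hcont : Continuous fun b ↦ L.threeTerm a b c z := by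
    unfold threeTerm
    exact Differentiable.continuous (𝕜 := ℂ) (by fun_prop)
  exact congrFun (hcont.ext_on hdense continuous_const fun b hb ↦
    L.threeTerm_eq_zero_of_notMem hb.1 hb.2.1 hb.2.2 a z) b

end ThreeTerm

section Addition

variable (L : EllLattice)

lemma sigma_fay (x y a b : ℂ) :
    L.sigma (x + a) * L.sigma (y + b) * L.sigma (x + y) * L.sigma (a - b) =
      L.sigma (x + a - b) * L.sigma (x + y + b) * L.sigma a * L.sigma y -
        L.sigma (x + y + a) * L.sigma (y + b - a) * L.sigma x * L.sigma b := by
  have h := L.threeTerm_eq_zero ((x + a - y - b) / 2) ((x + y + a - b) / 2)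
    ((x + y - a + b) / 2) ((x + y + a + b) / 2)
  simp only [threeTerm, sigmaPair] at h
  ring_nf at h ⊢
  rw [sigma_neg] at h
  linear_combination h

lemma zeta_neg (z : ℂ) : L.zeta (-z) = -L.zeta z := by
  have deriv_even : deriv L.sigma (-z) = deriv L.sigma z := by
    have h := deriv_comp_neg L.sigma z
    simp only [sigma_neg, deriv.fun_neg] at h
    exact (neg_injective h).symm
  rw [zeta, zeta, deriv_even, sigma_neg, div_neg]

variable {L}

lemma sigma_mul_zeta {z : ℂ} (hz : z ∉ L.lattice) : L.sigma z * L.zeta z = deriv L.sigma z :=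
  mul_div_cancel₀ _ (L.sigma_ne_zero hz)

lemma sigma_add_mul_sigma_add_mul_sigma_add {x y b : ℂ} (hx : x ∉ L.lattice) (hy : y ∉ L.lattice)
    (hb : b ∉ L.lattice) (hxyb : x + y + b ∉ L.lattice) :
    L.sigma (x + b) * L.sigma (y + b) * L.sigma (x + y) =
      L.sigma (x + y + b) * L.sigma x * L.sigma y * L.sigma b * L.chi x y b := by
  -- Differentiate `sigma_fay` with respect to `a` at `a = b`.
  have hσ (u : ℂ) : HasDerivAt L.sigma (deriv L.sigma u) u := (L.differentiable_sigma u).hasDerivAt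
  have deriv_left : HasDerivAt
      (fun a ↦ L.sigma (x + a) * L.sigma (y + b) * L.sigma (x + y) * L.sigma (a - b))
      (L.sigma (x + b) * L.sigma (y + b) * L.sigma (x + y)) b := by
    have hsub : HasDerivAt (fun a ↦ L.sigma (a - b)) 1 b :=
      HasDerivAt.comp_sub_const b b (by simpa using L.hasDerivAt_sigma_zero)
    have hfst : DifferentiableAt ℂ
        (fun a ↦ L.sigma (x + a) * L.sigma (y + b) * L.sigma (x + y)) b := by
      fun_prop
    simpa using hfst.hasDerivAt.fun_mul hsub
  have deriv_right : HasDerivAt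
      (fun a ↦ L.sigma (x + a - b) * L.sigma (x + y + b) * L.sigma a * L.sigma y -
        L.sigma (x + y + a) * L.sigma (y + b - a) * L.sigma x * L.sigma b)
      ((deriv L.sigma x * L.sigma (x + y + b) * L.sigma b +
          L.sigma x * L.sigma (x + y + b) * deriv L.sigma b) * L.sigma y -
        (deriv L.sigma (x + y + b) * L.sigma y + L.sigma (x + y + b) * -deriv L.sigma y) *
          L.sigma x * L.sigma b) b := by
    have h₁ : HasDerivAt (fun a ↦ L.sigma (x + a - b)) (deriv L.sigma x) b := by
      simpa only [add_sub_right_comm, sub_add_cancel] using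
        (hσ (x - b + b)).comp_const_add (x - b) b
    have h₂ : HasDerivAt (fun a ↦ L.sigma (x + y + a)) (deriv L.sigma (x + y + b)) b :=
      (hσ (x + y + b)).comp_const_add (x + y) b
    have h₃ : HasDerivAt (fun a ↦ L.sigma (y + b - a)) (-deriv L.sigma y) b := by
      simpa only [add_sub_cancel_right] using (hσ (y + b - b)).comp_const_sub (y + b) b
    have hfst := ((h₁.mul_const (L.sigma (x + y + b))).fun_mul (hσ b)).mul_const (L.sigma y)
    simpa using hfst.fun_sub
      (((h₂.fun_mul h₃).mul_const (L.sigma x)).mul_const (L.sigma b))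
  rw [← funext (L.sigma_fay x y · b)] at deriv_right
  rw [deriv_left.unique deriv_right, ← sigma_mul_zeta hx, ← sigma_mul_zeta hy, ← sigma_mul_zeta hb,
    ← sigma_mul_zeta hxyb, chi, show b + x + y = x + y + b by ring]
  ring

end Addition

section Phi

variable {L : EllLattice}

lemma Phi_neg_right (d k : ℂ) : L.Phi d (-k) = -L.Phi (-d) k := by
  rw [Phi, Phi, ← sub_eq_add_neg, neg_add_eq_sub, ← neg_sub k d, sigma_neg, sigma_neg, sigma_neg]
  ring

lemma Phi_eq_exp_mul_Psi (d k : ℂ) : L.Phi d k = Complex.exp (L.zeta d * k) * L.Psi d k := by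
  rw [Psi, mul_left_comm, ← Complex.exp_add, neg_mul, add_neg_cancel, Complex.exp_zero, mul_one]

lemma Phi_ne_zero {d k : ℂ} (hd : d ∉ L.lattice) (hk : k ∉ L.lattice) (hdk : d + k ∉ L.lattice) :
    L.Phi d k ≠ 0 :=
  div_ne_zero (L.sigma_ne_zero hdk) (mul_ne_zero (L.sigma_ne_zero hd) (L.sigma_ne_zero hk))

lemma Phi_add_mul_Phi_neg {x d k k' : ℂ} (hx : x ∉ L.lattice) (hd : d ∉ L.lattice)
    (hxd : x + d ∉ L.lattice) (hk : k ∉ L.lattice) (hk' : k' ∉ L.lattice)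
    (hkk' : k + k' ∉ L.lattice) :
    L.Phi (x + d) (k + k') * L.Phi d (-k) =
      L.Phi x (k + k') * L.Phi d k' - L.Phi (x + d) k' * L.Phi x k := by
  have fay := L.sigma_fay (x + d) (-d) (k + k') k
  rw [add_neg_cancel_right, add_sub_cancel_left, show x + d + (k + k') - k = x + d + k' by ring,
    show -d + k - (k + k') = -(d + k') by ring, sigma_neg, sigma_neg] at fay
  have hσx := L.sigma_ne_zero hx
  have hσd := L.sigma_ne_zero hd
  have hσxd := L.sigma_ne_zero hxd
  have hσk := L.sigma_ne_zero hk
  have hσk' := L.sigma_ne_zero hk'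
  have hσkk' := L.sigma_ne_zero hkk'
  rw [Phi_neg_right]
  simp only [Phi, sigma_neg]
  field_simp
  linear_combination fay

lemma Phi_mul_Phi {x y z : ℂ} (hx : x ∉ L.lattice) (hy : y ∉ L.lattice) (hz : z ∉ L.lattice)
    (hxy : x + y ∉ L.lattice) (hxyz : x + y + z ∉ L.lattice) :
    L.Phi x z * L.Phi y z = L.Phi (x + y) z * L.chi x y z := by
  have addition := sigma_add_mul_sigma_add_mul_sigma_add hx hy hz hxyz
  have hσx := L.sigma_ne_zero hx
  have hσy := L.sigma_ne_zero hy
  have hσz := L.sigma_ne_zero hz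
  have hσxy := L.sigma_ne_zero hxy
  simp only [Phi]
  field_simp
  linear_combination addition

end Phi

end EllLattice

section ResolventForm

variable {m n R : Type*} [Fintype m] [Fintype n] [DecidableEq m] [DecidableEq n] [CommRing R]

/-- The bilinear form `(s, r) ↦ sᵀ C (1 + M C)⁻¹ r`, of which `w₀` is a value. -/
def resolventForm (M : Matrix m n R) (C : Matrix n m R) : (n → R) →ₗ[R] (m → R) →ₗ[R] R :=
  Matrix.toLinearMap₂' R (C * (1 + M * C)⁻¹)

lemma resolventForm_apply (M : Matrix m n R) (C : Matrix n m R) (s : n → R) (r : m → R) :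
    resolventForm M C s r = s ⬝ᵥ C *ᵥ (1 + M * C)⁻¹ *ᵥ r := by
  rw [resolventForm, Matrix.toLinearMap₂'_apply', mulVec_mulVec]

variable {M : Matrix m n R} {C : Matrix n m R} {r : m → R} {s : n → R}

lemma det_one_add_add_vecMulVec_mul (hM : IsUnit (1 + M * C).det) :
    (1 + (M + vecMulVec r s) * C).det = (1 + M * C).det * (1 + resolventForm M C s r) := by
  have h := det_add_replicateCol_mul_replicateRow (ι := Unit) hM r (s ᵥ* C)
  rw [← vecMulVec_eq, ← vecMulVec_mul, add_assoc, ← Matrix.add_mul] at h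
  rw [h, det_unique (n := Unit), resolventForm_apply, dotProduct_mulVec, dotProduct_mulVec]
  simp [Matrix.mul_apply, dotProduct, vecMul]

lemma resolventForm_sub_resolventForm_add_vecMulVec (hM : IsUnit (1 + M * C).det)
    (hM' : IsUnit (1 + (M + vecMulVec r s) * C).det) (u : n → R) (v : m → R) :
    resolventForm M C u v - resolventForm (M + vecMulVec r s) C u v =
      resolventForm M C u r * resolventForm (M + vecMulVec r s) C s v := by
  have hinv := inv_sub_inv (A := 1 + M * C) (B := 1 + (M + vecMulVec r s) * C)
    (by simp only [isUnit_iff_isUnit_det, hM, hM'])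
  rw [add_sub_add_left_eq_sub, ← Matrix.sub_mul, add_sub_cancel_left] at hinv
  simp only [resolventForm_apply]
  rw [← dotProduct_sub, ← mulVec_sub, ← sub_mulVec, hinv]
  simp only [← mulVec_mulVec, vecMulVec_mulVec]
  simp [mulVec_smul, dotProduct_smul, mul_comm]

theorem resolventForm_sub_resolventForm_mul_det_mul_det
    {M M₁ M₂ M₁₂ : Matrix m n R} {r r₁ r₂ : m → R} {s₁ s₂ s₁₂ : n → R} {χ : R}
    (h₁ : M = M₁ + vecMulVec r s₁) (h₂ : M = M₂ + vecMulVec r s₂)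
    (h₁₂ : M₂ = M₁₂ + vecMulVec r₂ s₁₂) (hr : r₂ - r₁ = χ • r) (hs : s₁ - s₂ = χ • s₁₂)
    (hdet₁ : IsUnit (1 + M₁ * C).det) (hdet₂ : IsUnit (1 + M₂ * C).det) :
    (resolventForm M₁ C s₁ r₁ - resolventForm M₂ C s₂ r₂ - χ) *
        (1 + M₁ * C).det * (1 + M₂ * C).det =
      -χ * (1 + M * C).det * (1 + M₁₂ * C).det := by
  have hM₂ : M₂ = M₁ + vecMulVec (χ • r) s₁₂ := by
    rw [smul_vecMulVec, ← vecMulVec_smul, ← hs, vecMulVec_sub, ← add_sub_assoc, ← h₁, h₂,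
      add_sub_cancel_right]
  have hM₁₂ : M₁₂ = M₂ + vecMulVec (-r₂) s₁₂ := by
    rw [h₁₂, neg_vecMulVec, add_neg_cancel_right]
  have det_M : (1 + M * C).det = (1 + M₁ * C).det * (1 + resolventForm M₁ C s₁ r) := by
    rw [h₁, det_one_add_add_vecMulVec_mul hdet₁]
  have det_M₁₂ : (1 + M₁₂ * C).det = (1 + M₂ * C).det * (1 - resolventForm M₂ C s₁₂ r₂) := by
    rw [hM₁₂, det_one_add_add_vecMulVec_mul hdet₂, map_neg, sub_eq_add_neg]
  have resolvent_identity : resolventForm M₁ C s₁ r₂ - resolventForm M₂ C s₁ r₂ =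
      χ * resolventForm M₁ C s₁ r * resolventForm M₂ C s₁₂ r₂ := by
    rw [hM₂] at hdet₂ ⊢
    rw [resolventForm_sub_resolventForm_add_vecMulVec hdet₁ hdet₂, map_smul, smul_eq_mul]
  have form_r : resolventForm M₁ C s₁ r₂ - resolventForm M₁ C s₁ r₁ =
      χ * resolventForm M₁ C s₁ r := by
    rw [← map_sub, hr, map_smul, smul_eq_mul]
  have form_s : resolventForm M₂ C s₁ r₂ - resolventForm M₂ C s₂ r₂ =
      χ * resolventForm M₂ C s₁₂ r₂ := by
    rw [← LinearMap.sub_apply, ← map_sub, hs, map_smul, LinearMap.smul_apply, smul_eq_mul]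
  rw [det_M, det_M₁₂]
  linear_combination
    (1 + M₁ * C).det * (1 + M₂ * C).det * (form_s - form_r + resolvent_identity)

end ResolventForm

namespace EllLattice

section CauchyMatrix

variable {ι ι' : Type*} (L : EllLattice) (κ : ι → ℂ) (κ' : ι' → ℂ)

/-- The dressed elliptic Cauchy matrix with entries `aᵢ Φ_ξ(κᵢ + κ'ⱼ) bⱼ`. -/
def cauchyMatrix (ξ : ℂ) (a : ι → ℂ) (b : ι' → ℂ) : Matrix ι ι' ℂ :=
  Matrix.of fun i j ↦ a i * L.Phi ξ (κ i + κ' j) * b j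

/-- The dressed vector with entries `aᵢ Φ_ξ(κᵢ)`; both `r` and `s` are of this form. -/
def cauchyVector (ξ : ℂ) (a : ι → ℂ) : ι → ℂ := fun i ↦ a i * L.Phi ξ (κ i)

variable {L κ κ'} {ξ d e : ℂ}

lemma cauchyMatrix_eq_add_vecMulVec (hξ : ξ ∉ L.lattice) (hd : d ∉ L.lattice)
    (hξd : ξ + d ∉ L.lattice) (hκ : ∀ i, κ i ∉ L.lattice) (hκ' : ∀ j, κ' j ∉ L.lattice)
    (hκκ' : ∀ i j, κ i + κ' j ∉ L.lattice) (a : ι → ℂ) (b : ι' → ℂ) :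
    L.cauchyMatrix κ κ' ξ a (fun j ↦ b j * L.Phi d (κ' j)) =
      L.cauchyMatrix κ κ' (ξ + d) (fun i ↦ a i * L.Phi d (-κ i)) b +
        vecMulVec (L.cauchyVector κ ξ a) (L.cauchyVector κ' (ξ + d) b) := by
  ext i j
  have fay := Phi_add_mul_Phi_neg hξ hd hξd (hκ i) (hκ' j) (hκκ' i j)
  simp only [cauchyMatrix, cauchyVector, Matrix.add_apply, Matrix.of_apply, vecMulVec_apply]
  linear_combination -(a i * b j) * fay

lemma chi_neg_add (ξ d e : ℂ) :
    L.chi (-d) e (ξ + d) = L.zeta (ξ + d) + L.zeta e - L.zeta (ξ + e) - L.zeta d := by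
  rw [chi, zeta_neg, add_neg_cancel_right]
  ring

lemma cauchyVector_sub_cauchyVector (hd : d ∉ L.lattice) (he : e ∉ L.lattice)
    (hξd : ξ + d ∉ L.lattice) (hξe : ξ + e ∉ L.lattice) (hξde : ξ + d + e ∉ L.lattice)
    (hκ : ∀ i, κ i ∉ L.lattice) (hξκ : ∀ i, ξ + d + e + κ i ∉ L.lattice) (a : ι → ℂ) :
    L.cauchyVector κ (ξ + d) (fun i ↦ a i * L.Phi e (κ i)) -
        L.cauchyVector κ (ξ + e) (fun i ↦ a i * L.Phi d (κ i)) =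
      L.chi (-d) e (ξ + d) • L.cauchyVector κ (ξ + d + e) a := by
  have comm : ξ + e + d = ξ + d + e := add_right_comm ξ e d
  ext i
  have prod_d := Phi_mul_Phi hξd he (hκ i) hξde (hξκ i)
  have prod_e := Phi_mul_Phi hξe hd (hκ i) (comm ▸ hξde) (comm ▸ hξκ i)
  rw [chi, add_assoc (κ i)] at prod_d prod_e
  rw [comm] at prod_e
  simp only [cauchyVector, Pi.sub_apply, Pi.smul_apply, smul_eq_mul, chi_neg_add]
  linear_combination a i * (prod_d - prod_e)

lemma cauchyVector_neg_sub_cauchyVector_neg (hd : d ∉ L.lattice) (he : e ∉ L.lattice)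
    (hξ : ξ ∉ L.lattice) (hξd : ξ + d ∉ L.lattice) (hξe : ξ + e ∉ L.lattice)
    (hκ : ∀ i, κ i ∉ L.lattice) (hξκ : ∀ i, ξ + κ i ∉ L.lattice) (a : ι → ℂ) :
    L.cauchyVector κ (ξ + e) (fun i ↦ a i * L.Phi e (-κ i)) -
        L.cauchyVector κ (ξ + d) (fun i ↦ a i * L.Phi d (-κ i)) =
      L.chi (-d) e (ξ + d) • L.cauchyVector κ ξ a := by
  have prod {c : ℂ} (hc : c ∉ L.lattice) (hξc : ξ + c ∉ L.lattice) (i : ι) :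
      L.Phi (ξ + c) (κ i) * L.Phi c (-κ i) =
        -(L.Phi ξ (κ i) * (L.zeta (ξ + c) - L.zeta c + L.zeta (κ i) - L.zeta (κ i + ξ))) := by
    have h := Phi_mul_Phi hξc (y := -c) (by rwa [neg_mem_iff]) (hκ i)
      (by rwa [add_neg_cancel_right]) (by rw [add_neg_cancel_right]; exact hξκ i)
    rw [chi, zeta_neg, add_assoc (κ i), add_neg_cancel_right] at h
    rw [Phi_neg_right, mul_neg, h]
    ring
  ext i
  simp only [cauchyVector, Pi.sub_apply, Pi.smul_apply, smul_eq_mul, chi_neg_add]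
  linear_combination a i * (prod he hξe i - prod hd hξd i)

end CauchyMatrix

end EllLattice

namespace KPData

variable {N N' : ℕ} (D : KPData N N')

section CauchyForm

/-- The plane-wave factors `ρ_i` without the factor `e^{ζ(ξ)κ_i}`, which turns `Ψ_ξ` into `Φ_ξ`. -/
def reducedρ (n m h : ℤ) : Fin N → ℂ := fun i ↦
  D.L.Phi D.del (-D.κ i) ^ n * D.L.Phi D.eps (-D.κ i) ^ m * D.L.Phi D.lam (-D.κ i) ^ h * D.ρ0 i

/-- The plane-wave factors `ν_j` without the factor `e^{ζ(ξ)κ′_j}`, which turns `Ψ_ξ` into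
`Φ_ξ`. -/
def reducedν (n m h : ℤ) : Fin N' → ℂ := fun j ↦
  D.L.Phi D.del (D.κ' j) ^ (-n) * D.L.Phi D.eps (D.κ' j) ^ (-m) *
    D.L.Phi D.lam (D.κ' j) ^ (-h) * D.ν0 j

lemma r_eq_cauchyVector (n m h : ℤ) :
    D.r n m h = D.L.cauchyVector D.κ (D.xi n m h) (D.reducedρ n m h) := by
  ext i
  simp only [r, ρ, EllLattice.cauchyVector, reducedρ, EllLattice.Phi_eq_exp_mul_Psi,
    mul_neg, neg_mul]
  ring

lemma s_eq_cauchyVector (n m h : ℤ) :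
    D.s n m h = D.L.cauchyVector D.κ' (D.xi n m h) (D.reducedν n m h) := by
  ext j
  simp only [s, ν, EllLattice.cauchyVector, reducedν, EllLattice.Phi_eq_exp_mul_Psi]
  ring

lemma M_eq_cauchyMatrix (n m h : ℤ) :
    D.M n m h =
      D.L.cauchyMatrix D.κ D.κ' (D.xi n m h) (D.reducedρ n m h) (D.reducedν n m h) := by
  ext i j
  simp only [M, ρ, ν, EllLattice.cauchyMatrix, Matrix.of_apply, reducedρ, reducedν,
    EllLattice.Phi_eq_exp_mul_Psi, mul_neg, neg_mul, mul_add, Complex.exp_add]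
  ring

end CauchyForm

lemma xi_add_one_left (n m h : ℤ) : D.xi (n + 1) m h = D.xi n m h + D.del := by
  simp only [xi, add_smul, one_smul]
  ring

lemma xi_add_one_middle (n m h : ℤ) : D.xi n (m + 1) h = D.xi n m h + D.eps := by
  simp only [xi, add_smul, one_smul]
  ring

namespace Generic

variable {D} {P : ℕ} {extra : Fin P → ℂ}

lemma notMem_lattice (hD : D.Generic extra) {c0 cn cm ch : ℤ} {a : Fin N → ℤ} {b : Fin N' → ℤ}
    (hne : ¬(c0 = 0 ∧ cn = 0 ∧ cm = 0 ∧ ch = 0 ∧ a = 0 ∧ b = 0)) {z : ℂ}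
    (hz : z = c0 • D.xi0 + cn • D.del + cm • D.eps + ch • D.lam +
      (∑ i, a i • D.κ i) + ∑ j, b j • D.κ' j) :
    z ∉ D.L.lattice := by
  rw [← EllLattice.mem_iff_mem_lattice, hz]
  simpa using hD c0 cn cm ch a b 0 (by simpa using hne)

variable (hD : D.Generic extra)
include hD

lemma xi_notMem (n m h : ℤ) : D.xi n m h ∉ D.L.lattice :=
  hD.notMem_lattice (c0 := 1) (cn := n) (cm := m) (ch := h) (a := 0) (b := 0) (by simp)
    (by simp [xi])

lemma del_notMem : D.del ∉ D.L.lattice :=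
  hD.notMem_lattice (c0 := 0) (cn := 1) (cm := 0) (ch := 0) (a := 0) (b := 0) (by simp) (by simp)

lemma eps_notMem : D.eps ∉ D.L.lattice :=
  hD.notMem_lattice (c0 := 0) (cn := 0) (cm := 1) (ch := 0) (a := 0) (b := 0) (by simp) (by simp)

lemma κ_notMem (i : Fin N) : D.κ i ∉ D.L.lattice :=
  hD.notMem_lattice (c0 := 0) (cn := 0) (cm := 0) (ch := 0) (a := Pi.single i 1) (b := 0)
    (by simp) (by simp [Pi.single_apply])

lemma κ'_notMem (j : Fin N') : D.κ' j ∉ D.L.lattice :=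
  hD.notMem_lattice (c0 := 0) (cn := 0) (cm := 0) (ch := 0) (a := 0) (b := Pi.single j 1)
    (by simp) (by simp [Pi.single_apply])

lemma κ_add_κ'_notMem (i : Fin N) (j : Fin N') : D.κ i + D.κ' j ∉ D.L.lattice :=
  hD.notMem_lattice (c0 := 0) (cn := 0) (cm := 0) (ch := 0) (a := Pi.single i 1)
    (b := Pi.single j 1) (by simp) (by simp [Pi.single_apply])

lemma xi_add_κ_notMem (n m h : ℤ) (i : Fin N) : D.xi n m h + D.κ i ∉ D.L.lattice :=
  hD.notMem_lattice (c0 := 1) (cn := n) (cm := m) (ch := h) (a := Pi.single i 1) (b := 0)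
    (by simp) (by simp [xi, Pi.single_apply])

lemma xi_add_κ'_notMem (n m h : ℤ) (j : Fin N') : D.xi n m h + D.κ' j ∉ D.L.lattice :=
  hD.notMem_lattice (c0 := 1) (cn := n) (cm := m) (ch := h) (a := 0) (b := Pi.single j 1)
    (by simp) (by simp [xi, Pi.single_apply])

lemma Phi_del_neg_κ_ne_zero (i : Fin N) : D.L.Phi D.del (-D.κ i) ≠ 0 :=
  EllLattice.Phi_ne_zero hD.del_notMem (by simpa using hD.κ_notMem i)
    (hD.notMem_lattice (c0 := 0) (cn := 1) (cm := 0) (ch := 0) (a := Pi.single i (-1)) (b := 0)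
      (by simp) (by simp [Pi.single_apply]))

lemma Phi_eps_neg_κ_ne_zero (i : Fin N) : D.L.Phi D.eps (-D.κ i) ≠ 0 :=
  EllLattice.Phi_ne_zero hD.eps_notMem (by simpa using hD.κ_notMem i)
    (hD.notMem_lattice (c0 := 0) (cn := 0) (cm := 1) (ch := 0) (a := Pi.single i (-1)) (b := 0)
      (by simp) (by simp [Pi.single_apply]))

lemma Phi_del_κ'_ne_zero (j : Fin N') : D.L.Phi D.del (D.κ' j) ≠ 0 :=
  EllLattice.Phi_ne_zero hD.del_notMem (hD.κ'_notMem j)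
    (hD.notMem_lattice (c0 := 0) (cn := 1) (cm := 0) (ch := 0) (a := 0) (b := Pi.single j 1)
      (by simp) (by simp [Pi.single_apply]))

lemma Phi_eps_κ'_ne_zero (j : Fin N') : D.L.Phi D.eps (D.κ' j) ≠ 0 :=
  EllLattice.Phi_ne_zero hD.eps_notMem (hD.κ'_notMem j)
    (hD.notMem_lattice (c0 := 0) (cn := 0) (cm := 1) (ch := 0) (a := 0) (b := Pi.single j 1)
      (by simp) (by simp [Pi.single_apply]))

end Generic

section Shifts

variable {D} {P : ℕ} {extra : Fin P → ℂ} (hD : D.Generic extra)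
include hD

lemma reducedρ_add_one_left (n m h : ℤ) :
    D.reducedρ (n + 1) m h = fun i ↦ D.reducedρ n m h i * D.L.Phi D.del (-D.κ i) := by
  ext i
  rw [reducedρ, reducedρ, zpow_add_one₀ (hD.Phi_del_neg_κ_ne_zero i)]
  ring

lemma reducedρ_add_one_middle (n m h : ℤ) :
    D.reducedρ n (m + 1) h = fun i ↦ D.reducedρ n m h i * D.L.Phi D.eps (-D.κ i) := by
  ext i
  rw [reducedρ, reducedρ, zpow_add_one₀ (hD.Phi_eps_neg_κ_ne_zero i)]
  ring

lemma reducedν_eq_add_one_left (n m h : ℤ) :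
    D.reducedν n m h = fun j ↦ D.reducedν (n + 1) m h j * D.L.Phi D.del (D.κ' j) := by
  ext j
  rw [reducedν, reducedν, show -n = -(n + 1) + 1 by ring,
    zpow_add_one₀ (hD.Phi_del_κ'_ne_zero j)]
  ring

lemma reducedν_eq_add_one_middle (n m h : ℤ) :
    D.reducedν n m h = fun j ↦ D.reducedν n (m + 1) h j * D.L.Phi D.eps (D.κ' j) := by
  ext j
  rw [reducedν, reducedν, show -m = -(m + 1) + 1 by ring,
    zpow_add_one₀ (hD.Phi_eps_κ'_ne_zero j)]
  ring

lemma M_eq_add_one_left_add_vecMulVec (n m h : ℤ) :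
    D.M n m h = D.M (n + 1) m h + vecMulVec (D.r n m h) (D.s (n + 1) m h) := by
  have hξ := hD.xi_notMem (n + 1) m h
  rw [M_eq_cauchyMatrix, M_eq_cauchyMatrix, r_eq_cauchyVector, s_eq_cauchyVector,
    reducedρ_add_one_left hD, reducedν_eq_add_one_left hD n]
  rw [xi_add_one_left] at hξ ⊢
  exact EllLattice.cauchyMatrix_eq_add_vecMulVec (hD.xi_notMem n m h) hD.del_notMem hξ
    hD.κ_notMem hD.κ'_notMem hD.κ_add_κ'_notMem _ _

lemma M_eq_add_one_middle_add_vecMulVec (n m h : ℤ) :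
    D.M n m h = D.M n (m + 1) h + vecMulVec (D.r n m h) (D.s n (m + 1) h) := by
  have hξ := hD.xi_notMem n (m + 1) h
  rw [M_eq_cauchyMatrix, M_eq_cauchyMatrix, r_eq_cauchyVector, s_eq_cauchyVector,
    reducedρ_add_one_middle hD, reducedν_eq_add_one_middle hD n m]
  rw [xi_add_one_middle] at hξ ⊢
  exact EllLattice.cauchyMatrix_eq_add_vecMulVec (hD.xi_notMem n m h) hD.eps_notMem hξ
    hD.κ_notMem hD.κ'_notMem hD.κ_add_κ'_notMem _ _

lemma r_sub_r (n m h : ℤ) :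
    D.r n (m + 1) h - D.r (n + 1) m h =
      D.L.chi (-D.del) D.eps (D.xi (n + 1) m h) • D.r n m h := by
  have hξd := hD.xi_notMem (n + 1) m h
  have hξe := hD.xi_notMem n (m + 1) h
  rw [r_eq_cauchyVector, r_eq_cauchyVector, r_eq_cauchyVector, reducedρ_add_one_left hD,
    reducedρ_add_one_middle hD]
  rw [xi_add_one_left] at hξd ⊢
  rw [xi_add_one_middle] at hξe ⊢
  exact EllLattice.cauchyVector_neg_sub_cauchyVector_neg hD.del_notMem hD.eps_notMem
    (hD.xi_notMem n m h) hξd hξe hD.κ_notMem (hD.xi_add_κ_notMem n m h) _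

lemma s_sub_s (n m h : ℤ) :
    D.s (n + 1) m h - D.s n (m + 1) h =
      D.L.chi (-D.del) D.eps (D.xi (n + 1) m h) • D.s (n + 1) (m + 1) h := by
  have hξd := hD.xi_notMem (n + 1) m h
  have hξe := hD.xi_notMem n (m + 1) h
  have hξde := hD.xi_notMem (n + 1) (m + 1) h
  have hξκ := hD.xi_add_κ'_notMem (n + 1) (m + 1) h
  rw [s_eq_cauchyVector, s_eq_cauchyVector, s_eq_cauchyVector,
    reducedν_eq_add_one_middle hD (n + 1), reducedν_eq_add_one_left hD n (m + 1)]
  simp only [xi_add_one_middle D (n + 1), xi_add_one_left] at hξd hξde hξκ ⊢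
  rw [xi_add_one_middle] at hξe ⊢
  exact EllLattice.cauchyVector_sub_cauchyVector hD.del_notMem hD.eps_notMem hξd hξe hξde
    hD.κ'_notMem hξκ _

end Shifts

lemma w0_eq_resolventForm (n m h : ℤ) :
    D.w0 n m h = resolventForm (D.M n m h) D.C (D.s n m h) (D.r n m h) :=
  (resolventForm_apply _ _ _ _).symm

lemma w_sub_w (n m h : ℤ) :
    D.w n (m + 1) h - D.w (n + 1) m h =
      D.w0 (n + 1) m h - D.w0 n (m + 1) h - D.L.chi (-D.del) D.eps (D.xi (n + 1) m h) := by
  rw [w, w, xi_add_one_left, xi_add_one_middle, EllLattice.chi_neg_add, add_smul, add_smul,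
    one_smul, one_smul]
  ring

end KPData

/-- Relation between `w` and the τ-function:
`(ŵ − w̃)·τ̃·τ̂ = −χ_{−δ,ε}(ξ+δ)·τ·τ̂̃`. -/
theorem w_tau_relation {N N' : ℕ} (D : KPData N N')
    (hρ0 : ∀ i, D.ρ0 i ≠ 0) (hν0 : ∀ j, D.ν0 j ≠ 0)
    (hgen : D.Generic ![])
    (hInv : ∀ n m h : ℤ, IsUnit ((1 + D.M n m h * D.C).det)) :
    ∀ n m h : ℤ,
      (D.w n (m + 1) h - D.w (n + 1) m h) * D.τ (n + 1) m h * D.τ n (m + 1) h =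
        -(D.L.chi (-D.del) D.eps (D.xi (n + 1) m h)) * D.τ n m h *
          D.τ (n + 1) (m + 1) h := by
  intro n m h
  rw [D.w_sub_w, D.w0_eq_resolventForm, D.w0_eq_resolventForm]
  exact resolventForm_sub_resolventForm_mul_det_mul_det
    (KPData.M_eq_add_one_left_add_vecMulVec hgen n m h)
    (KPData.M_eq_add_one_middle_add_vecMulVec hgen n m h)
    (KPData.M_eq_add_one_left_add_vecMulVec hgen n (m + 1) h)
    (KPData.r_sub_r hgen n m h) (KPData.s_sub_s hgen n m h)
    (hInv (n + 1) m h) (hInv n (m + 1) h)
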